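/- Let Λ be a group with a subgroup Δ ≤ Λ, let A and B be unital C*-algebras, let α : Λ → Aut(A) and β : Λ → Aut(B) be actions, let ψ : A → B be a ⋆-isomorphism, and let w : Λ → U(B) be a weak 1-cocycle for β such that w_γ · β_γ(b) · w_γ* = ψ(α_γ(ψ⁻¹(b))) for every γ ∈ Λ and every b ∈ B. If u, u' : Λ → U(A) are weak 1-cocycles for α that are Δ-locally weakly cohomologous, then the maps γ ↦ ψ(u_γ)·w_γ and γ ↦ ψ(u'_γ)·w_γ are weak 1-cocycles for β that are Δ-locally weakly cohomologous. -/

import Mathlib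

/-- `u : Λ → A` is a weak 1-cocycle for the action `α` (a map into unitaries satisfying the
cocycle identity up to scalars). -/
def IsWeakOneCocycle {Λ A : Type*} [Group Λ]
    [NormedRing A] [StarRing A] [CStarRing A] [NormedAlgebra ℂ A] [StarModule ℂ A]
    [CompleteSpace A]
    (α : Λ → (A ≃⋆ₐ[ℂ] A)) (u : Λ → A) : Prop :=
  (∀ γ, u γ ∈ unitary A) ∧
    ∀ γ ρ : Λ, ∃ c : ℂ, u γ * α γ (u ρ) = c • u (γ * ρ)

/-- Two weak 1-cocycles `u, u'` for `α` are `Δ`-locally weakly cohomologous: there is a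
unitary `v` such that `u'_γ = c ⬝ v* u_γ α_γ(v)` up to scalars, for every `γ ∈ Δ`. -/
def LocallyWeaklyCohomologous {Λ A : Type*} [Group Λ]
    [NormedRing A] [StarRing A] [CStarRing A] [NormedAlgebra ℂ A] [StarModule ℂ A]
    [CompleteSpace A]
    (Δ : Subgroup Λ) (α : Λ → (A ≃⋆ₐ[ℂ] A)) (u u' : Λ → A) : Prop :=
  ∃ v ∈ unitary A, ∀ γ ∈ Δ, ∃ c : ℂ, u' γ = c • (star v * u γ * α γ v)

/-! Unitarity of `w γ` turns the covariance condition into `w γ * β γ (ψ a) = ψ (α γ a) * w γ`, so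
`w γ` can be moved past `β γ (ψ a)`. In the cocycle identity for `ψ (u γ) * w γ` this separates the
identities for `u` and `w`, whose scalars multiply. If the unitary `v` relates `u` to `u'`, then
`ψ v` relates their transports, with the same scalars. -/

theorem semiconjBy_unitary_iff_star_right_conjugate {R : Type*} [Monoid R] [StarMul R] {u x y : R}
    (hu : u ∈ unitary R) : SemiconjBy u x y ↔ u * x * star u = y :=
  (Units.mul_inv_eq_iff_eq_mul (Unitary.toUnits ⟨u, hu⟩)).symm

section Transport

variable {Λ A B F : Type*} [Group Λ]
  [NormedRing A] [StarRing A] [CStarRing A] [NormedAlgebra ℂ A] [StarModule ℂ A] [CompleteSpace A]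
  [NormedRing B] [StarRing B] [CStarRing B] [NormedAlgebra ℂ B] [StarModule ℂ B] [CompleteSpace B]
  [FunLike F A B] [AlgHomClass F ℂ A B] [StarHomClass F A B]
  {α : Λ → (A ≃⋆ₐ[ℂ] A)} {β : Λ → (B ≃⋆ₐ[ℂ] B)} {ψ : F} {w : Λ → B} {u u' : Λ → A}

theorem IsWeakOneCocycle.map_mul_of_semiconjBy (hu : IsWeakOneCocycle α u)
    (hw : IsWeakOneCocycle β w) (hψ : ∀ γ a, SemiconjBy (w γ) (β γ (ψ a)) (ψ (α γ a))) :
    IsWeakOneCocycle β (fun γ => ψ (u γ) * w γ) := by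
  refine ⟨fun γ => mul_mem (Unitary.map_mem ψ (hu.1 γ)) (hw.1 γ), fun γ ρ => ?_⟩
  obtain ⟨c, hc⟩ := hu.2 γ ρ
  obtain ⟨d, hd⟩ := hw.2 γ ρ
  refine ⟨c * d, ?_⟩
  calc ψ (u γ) * w γ * β γ (ψ (u ρ) * w ρ)
      = ψ (u γ) * (w γ * β γ (ψ (u ρ))) * β γ (w ρ) := by
        simp only [map_mul, mul_assoc]
    _ = ψ (u γ * α γ (u ρ)) * (w γ * β γ (w ρ)) := by
        simp only [(hψ γ (u ρ)).eq, map_mul, mul_assoc]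
    _ = (c * d) • (ψ (u (γ * ρ)) * w (γ * ρ)) := by
        rw [hc, hd, map_smul, smul_mul_smul_comm]

theorem LocallyWeaklyCohomologous.map_mul_of_semiconjBy {Δ : Subgroup Λ}
    (h : LocallyWeaklyCohomologous Δ α u u')
    (hψ : ∀ γ ∈ Δ, ∀ a, SemiconjBy (w γ) (β γ (ψ a)) (ψ (α γ a))) :
    LocallyWeaklyCohomologous Δ β (fun γ => ψ (u γ) * w γ) (fun γ => ψ (u' γ) * w γ) := by
  obtain ⟨v, hv, hvu⟩ := h
  refine ⟨ψ v, Unitary.map_mem ψ hv, fun γ hγ => ?_⟩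
  obtain ⟨c, hc⟩ := hvu γ hγ
  refine ⟨c, ?_⟩
  calc ψ (u' γ) * w γ
      = c • (star (ψ v) * ψ (u γ) * (ψ (α γ v) * w γ)) := by
        simp only [hc, map_smul, map_mul, map_star, smul_mul_assoc, mul_assoc]
    _ = c • (star (ψ v) * (ψ (u γ) * w γ) * β γ (ψ v)) := by
        simp only [← (hψ γ hγ v).eq, mul_assoc]

theorem locallyWeaklyCohomologous_transport_general {Δ : Subgroup Λ} (hw : IsWeakOneCocycle β w)
    (hcov : ∀ γ a, w γ * β γ (ψ a) * star (w γ) = ψ (α γ a))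
    (hu : IsWeakOneCocycle α u) (hu' : IsWeakOneCocycle α u')
    (huu' : LocallyWeaklyCohomologous Δ α u u') :
    IsWeakOneCocycle β (fun γ => ψ (u γ) * w γ) ∧
      IsWeakOneCocycle β (fun γ => ψ (u' γ) * w γ) ∧
      LocallyWeaklyCohomologous Δ β (fun γ => ψ (u γ) * w γ) (fun γ => ψ (u' γ) * w γ) := by
  have hψ : ∀ γ a, SemiconjBy (w γ) (β γ (ψ a)) (ψ (α γ a)) := fun γ a =>
    (semiconjBy_unitary_iff_star_right_conjugate (hw.1 γ)).2 (hcov γ a)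
  exact ⟨hu.map_mul_of_semiconjBy hw hψ, hu'.map_mul_of_semiconjBy hw hψ,
    huu'.map_mul_of_semiconjBy fun γ _ => hψ γ⟩

end Transport

/-- If `ψ : A → B` is a ⋆-isomorphism and `w` is a weak 1-cocycle for `β` with
`w_γ β_γ(b) w_γ* = ψ(α_γ(ψ⁻¹(b)))`, and if `u, u'` are `Δ`-locally weakly cohomologous weak
1-cocycles for `α`, then `γ ↦ ψ(u_γ) w_γ` and `γ ↦ ψ(u'_γ) w_γ` are weak 1-cocycles for `β`
that are `Δ`-locally weakly cohomologous. -/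
theorem locallyWeaklyCohomologous_transport {Λ A B : Type*} [Group Λ]
    [NormedRing A] [StarRing A] [CStarRing A] [NormedAlgebra ℂ A] [StarModule ℂ A]
    [CompleteSpace A]
    [NormedRing B] [StarRing B] [CStarRing B] [NormedAlgebra ℂ B] [StarModule ℂ B]
    [CompleteSpace B]
    (Δ : Subgroup Λ)
    (α : Λ → (A ≃⋆ₐ[ℂ] A)) (hα : ∀ γ ρ : Λ, ∀ a : A, α (γ * ρ) a = α γ (α ρ a))
    (β : Λ → (B ≃⋆ₐ[ℂ] B)) (hβ : ∀ γ ρ : Λ, ∀ b : B, β (γ * ρ) b = β γ (β ρ b))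
    (ψ : A ≃⋆ₐ[ℂ] B)
    (w : Λ → B) (hw : IsWeakOneCocycle β w)
    (hcov : ∀ γ : Λ, ∀ b : B, w γ * β γ b * star (w γ) = ψ (α γ (ψ.symm b)))
    (u u' : Λ → A) (hu : IsWeakOneCocycle α u) (hu' : IsWeakOneCocycle α u')
    (huu' : LocallyWeaklyCohomologous Δ α u u') :
    IsWeakOneCocycle β (fun γ => ψ (u γ) * w γ) ∧
      IsWeakOneCocycle β (fun γ => ψ (u' γ) * w γ) ∧
      LocallyWeaklyCohomologous Δ β (fun γ => ψ (u γ) * w γ) (fun γ => ψ (u' γ) * w γ) :=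
  locallyWeaklyCohomologous_transport_general hw
    (fun γ a => by rw [hcov, StarAlgEquiv.symm_apply_apply]) hu hu' huu'
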